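/- arXiv:2211.07736 — 2 statements merged into one kernel-verified Lean document; each statement's English description precedes it below -/
import Mathlib

section
/- Let X be a complex Banach space and let T, S be bounded linear operators on X with TS = ST. If acc σ(T) ⊆ {0} and acc σ(S) ⊆ {0}, then acc σ(TS) ⊆ {0}. -/
open Ordinal Set

/-- The `α`-th Cantor–Bendixson derivative of a set `A ⊆ ℂ`, defined by transfinite
recursion: `cbd A 0 = A`, `cbd A (β+1) = derivedSet (cbd A β)` (the set of accumulation
points of `cbd A β`), and `cbd A α = ⋂_{β < α} cbd A β` for limit ordinals `α`. -/
noncomputable def cbd (A : Set ℂ) (α : Ordinal) : Set ℂ :=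
  Ordinal.limitRecOn α A (fun _ ih => derivedSet ih)
    (fun α _ ih => ⋂ (β : Set.Iio α), ih β.1 β.2)

variable {X : Type*} [NormedAddCommGroup X] [NormedSpace ℂ X] [CompleteSpace X]

/-- The restriction `T_M` of a bounded operator `T` to a `T`-invariant subspace `M`. -/
noncomputable def restr (T : X →L[ℂ] X) (M : Submodule ℂ X)
    (hM : ∀ x ∈ M, T x ∈ M) : M →L[ℂ] M :=
  { toLinearMap := T.toLinearMap.restrict hM
    cont := (T.continuous.comp continuous_subtype_val).subtype_mk _ }

/-!
For commuting `a` and `b`, Gelfand theory in the commutative Banach algebra given by the double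
commutant of `{a, b}` yields `σ(ab) ⊆ σ(a) σ(b)`. For compact sets `K` and `L` of scalars, a
sequence of products converging to `z` but avoiding it has, along a subsequence, factors converging
to some `x ∈ K` and `y ∈ L` with `xy = z`, and infinitely many of the factors differ from their
limit on at least one side. Hence `acc (KL) ⊆ (acc K) L ∪ K (acc L)`, and a product with a factor
`0` is `0`.
-/

section DerivedSet

open Filter Topology
open scoped Pointwise

variable {Y Z : Type*} [TopologicalSpace Y] [TopologicalSpace Z]

lemma derivedSet_prod (K : Set Y) (L : Set Z) :
    derivedSet (K ×ˢ L) = derivedSet K ×ˢ closure L ∪ closure K ×ˢ derivedSet L := by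
  ext ⟨y, z⟩
  have diff_singleton : (K ×ˢ L) \ {(y, z)} = (K \ {y}) ×ˢ L ∪ K ×ˢ (L \ {z}) := by
    ext ⟨y', z'⟩
    simp only [Set.mem_sdiff, mem_prod, mem_singleton_iff, Prod.mk.injEq, mem_union]
    tauto
  simp only [mem_union, mem_prod, mem_derivedSet, accPt_principal_iff_nhdsWithin, diff_singleton,
    nhdsWithin_union, sup_neBot, nhdsWithin_prod_eq, prod_neBot, mem_closure_iff_nhdsWithin_neBot]

lemma derivedSet_image_subset_of_isCompact [T2Space Z] {K : Set Y} (hK : IsCompact K) {f : Y → Z}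
    (hf : ContinuousOn f K) : derivedSet (f '' K) ⊆ f '' derivedSet K := by
  intro z hz
  let F : Filter Y := 𝓟 K ⊓ comap f (𝓝[≠] z)
  have F_neBot : F.NeBot := by
    rw [neBot_inf_comap_iff_map, map_principal, inf_comm]
    exact hz
  obtain ⟨y, hyK, hy : (𝓝 y ⊓ F).NeBot⟩ := hK (f := F) inf_le_left
  have tendsto_f : Tendsto f F (𝓝[≠] z) := tendsto_comap.mono_left inf_le_right
  have fy_eq : f y = z := tendsto_nhds_unique
    ((hf y hyK).mono_left (inf_le_inf_left _ inf_le_left))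
    ((tendsto_f.mono_right nhdsWithin_le_nhds).mono_left inf_le_right)
  have eventually_ne : ∀ᶠ x in F, x ≠ y :=
    (tendsto_f.eventually self_mem_nhdsWithin).mono fun x hx hxy => hx (by rw [hxy, fy_eq]; rfl)
  have le_accPt : 𝓝 y ⊓ F ≤ 𝓝[≠] y ⊓ 𝓟 K :=
    le_inf (inf_le_inf_left _ (le_principal_iff.2 eventually_ne)) (inf_le_right.trans inf_le_left)
  exact ⟨y, hy.mono le_accPt, fy_eq⟩

lemma derivedSet_mul_subset_of_isCompact [Mul Z] [ContinuousMul Z] [T2Space Z] {K L : Set Z}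
    (hK : IsCompact K) (hL : IsCompact L) :
    derivedSet (K * L) ⊆ derivedSet K * L ∪ K * derivedSet L := by
  calc derivedSet (K * L)
      = derivedSet ((fun p : Z × Z => p.1 * p.2) '' K ×ˢ L) := by rw [image_mul_prod]
    _ ⊆ (fun p : Z × Z => p.1 * p.2) '' derivedSet (K ×ˢ L) :=
        derivedSet_image_subset_of_isCompact (hK.prod hL) continuous_mul.continuousOn
    _ = derivedSet K * L ∪ K * derivedSet L := by
        rw [derivedSet_prod, hK.isClosed.closure_eq, hL.isClosed.closure_eq, image_union,
          image_mul_prod, image_mul_prod]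

end DerivedSet

lemma units_inv_mem_centralizer {M : Type*} [Monoid M] {D : Set M} {u : Mˣ}
    (hu : ↑u ∈ centralizer D) : ↑u⁻¹ ∈ centralizer D := fun d hd =>
  Commute.units_inv_right (hu d hd)

lemma isUnit_coe_centralizer_iff {R A : Type*} [CommSemiring R] [Semiring A] [Algebra R A]
    {D : Set A} {x : Subalgebra.centralizer R D} : IsUnit (x : A) ↔ IsUnit x := by
  refine ⟨?_, fun hx => hx.map (Subalgebra.centralizer R D).val⟩
  obtain ⟨_, mem_centralizer⟩ := x
  rintro ⟨u, rfl⟩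
  exact isUnit_iff_exists.2 ⟨⟨↑u⁻¹, units_inv_mem_centralizer mem_centralizer⟩,
    Subtype.ext u.mul_inv, Subtype.ext u.inv_mul⟩

lemma spectrum_coe_centralizer {R A : Type*} [CommRing R] [Ring A] [Algebra R A] {D : Set A}
    (x : Subalgebra.centralizer R D) : spectrum R (x : A) = spectrum R x := by
  ext r
  simp only [spectrum.mem_iff]
  exact not_congr (isUnit_coe_centralizer_iff (x := algebraMap R _ r - x))

section BanachAlgebra

open WeakDual.CharacterSpace
open scoped Pointwise

variable {A : Type*} [NormedRing A] [NormedAlgebra ℂ A] [CompleteSpace A] {a b : A}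

lemma spectrum_mul_subset_of_commutative {B : Type*} [NormedCommRing B] [NormedAlgebra ℂ B]
    [CompleteSpace B] (a b : B) : spectrum ℂ (a * b) ⊆ spectrum ℂ a * spectrum ℂ b := by
  intro z hz
  obtain ⟨χ, rfl⟩ := mem_spectrum_iff_exists.1 hz
  rw [map_mul]
  exact mul_mem_mul (apply_mem_spectrum χ a) (apply_mem_spectrum χ b)

lemma spectrum_mul_subset_of_commute (hab : Commute a b) :
    spectrum ℂ (a * b) ⊆ spectrum ℂ a * spectrum ℂ b := by
  -- Invertibility, hence the spectrum, is the same in a double commutant as in `A`; in the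
  -- closed subalgebra generated by `a` and `b` the spectrum could be larger.
  let C : Subalgebra ℂ A := Subalgebra.centralizer ℂ (centralizer {a, b})
  have pair_comm : ∀ x ∈ ({a, b} : Set A), ∀ y ∈ ({a, b} : Set A), x * y = y * x := by
    rintro x (rfl | rfl) y (rfl | rfl)
    exacts [rfl, hab, hab.symm, rfl]
  let : NormedCommRing C :=
    { (inferInstance : NormedRing C) with
      mul_comm := fun x y => Subtype.ext
        (centralizer_centralizer_comm_of_comm pair_comm x x.2 y y.2) }
  have : CompleteSpace C := (isClosed_centralizer _).completeSpace_coe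
  let a' : C := ⟨a, subset_centralizer_centralizer (mem_insert a {b})⟩
  let b' : C := ⟨b, subset_centralizer_centralizer (mem_insert_of_mem a rfl)⟩
  calc spectrum ℂ (a * b)
      = spectrum ℂ (a' * b') := spectrum_coe_centralizer (a' * b')
    _ ⊆ spectrum ℂ a' * spectrum ℂ b' := spectrum_mul_subset_of_commutative a' b'
    _ = spectrum ℂ a * spectrum ℂ b :=
        congrArg₂ (· * ·) (spectrum_coe_centralizer a').symm (spectrum_coe_centralizer b').symm

lemma derivedSet_spectrum_mul_subset (hab : Commute a b) :
    derivedSet (spectrum ℂ (a * b)) ⊆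
      derivedSet (spectrum ℂ a) * spectrum ℂ b ∪ spectrum ℂ a * derivedSet (spectrum ℂ b) :=
  (derivedSet_mono _ _ (spectrum_mul_subset_of_commute hab)).trans
    (derivedSet_mul_subset_of_isCompact (spectrum.isCompact a) (spectrum.isCompact b))

theorem zeroloid_mul_general (hab : Commute a b) (ha : derivedSet (spectrum ℂ a) ⊆ {0})
    (hb : derivedSet (spectrum ℂ b) ⊆ {0}) : derivedSet (spectrum ℂ (a * b)) ⊆ {0} := by
  intro z hz
  obtain ⟨x, hx, y, -, rfl⟩ | ⟨x, -, y, hy, rfl⟩ := derivedSet_spectrum_mul_subset hab hz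
  · exact mul_eq_zero_of_left (ha hx) y
  · exact mul_eq_zero_of_right x (hb hy)

end BanachAlgebra

/-- If two bounded operators on a complex Banach space commute and each is zeroloid
(i.e. `acc σ(·) ⊆ {0}`), then their product is zeroloid. -/
theorem zeroloid_mul (T S : X →L[ℂ] X) (hc : T * S = S * T)
    (hT : derivedSet (spectrum ℂ T) ⊆ {0}) (hS : derivedSet (spectrum ℂ S) ⊆ {0}) :
    derivedSet (spectrum ℂ (T * S)) ⊆ {0} :=
  zeroloid_mul_general hc hT hS
end

section
/- Let X be a complex Banach space, T a bounded linear operator on X, β an ordinal, and μ ∈ ℂ. Then μ ∉ acc^{β+1} σ(T) if and only if there exists (M, N) ∈ Red(T) such that (T − μI)_M is an invertible operator on M and acc^β σ((T − μI)_N) ⊆ {0}. -/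
open Ordinal Set

variable {X : Type*} [NormedAddCommGroup X] [NormedSpace ℂ X] [CompleteSpace X]

/-!
If `μ` is not an accumulation point of `acc^β σ(T)`, then, since `σ(T) \ acc^β σ(T)` is countable,
some circle about `μ` misses `σ(T)` and encloses no point of `acc^β σ(T)` other than `μ`. The
projection `P = (2πi)⁻¹ ∮ (z - T)⁻¹ dz` over this circle commutes with `T`, and integrating
`(l - T) (z - T)⁻¹ = 1 + (l - z) (z - T)⁻¹` against `(l - z)⁻¹` inverts `l - T` on `ker P` for `l`
inside the circle and on `ran P` for `l` outside. Fubini over two concentric circles makes `P`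
idempotent, so that `X = ker P ⊕ ran P`.

Conversely `σ(T) = σ(T_M) ∪ σ(T_N)` for every reducing pair, so `σ(T)` lies in `σ(T_N)` near a point
`μ ∉ σ(T_M)`, and Cantor–Bendixson derivatives are local.
-/

open Complex Filter Metric Real Topology

section CantorBendixson

variable {A B U : Set ℂ} {o : Ordinal}

theorem cbd_zero (A : Set ℂ) : cbd A 0 = A :=
  Ordinal.limitRecOn_zero ..

theorem cbd_add_one (A : Set ℂ) (o : Ordinal) : cbd A (o + 1) = derivedSet (cbd A o) :=
  Ordinal.limitRecOn_add_one ..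

theorem cbd_limit (A : Set ℂ) (ho : Order.IsSuccLimit o) :
    cbd A o = ⋂ b : Iio o, cbd A b.1 :=
  Ordinal.limitRecOn_limit _ _ _ _ ho

theorem cbd_inter_subset_of_isOpen (hU : IsOpen U) (h : A ∩ U ⊆ B) (o : Ordinal) :
    cbd A o ∩ U ⊆ cbd B o := by
  induction o using Ordinal.limitRecOn with
  | zero => simpa only [cbd_zero] using h
  | add_one o ih =>
    rw [cbd_add_one, cbd_add_one]
    rintro x ⟨hx, hxU⟩
    have hacc : AccPt x (𝓟 (U ∩ cbd A o)) := AccPt.nhds_inter hx (hU.mem_nhds hxU)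
    exact hacc.mono (principal_mono.2 (by rwa [inter_comm]))
  | limit o ho ih =>
    rw [cbd_limit A ho, cbd_limit B ho]
    exact subset_iInter fun b => (inter_subset_inter_left U (iInter_subset _ b)).trans (ih b.1 b.2)

theorem cbd_mono (h : A ⊆ B) (o : Ordinal) : cbd A o ⊆ cbd B o := by
  simpa using cbd_inter_subset_of_isOpen isOpen_univ (by simpa using h) o

theorem cbd_subset (hA : IsClosed A) (o : Ordinal) : cbd A o ⊆ A := by
  induction o using Ordinal.limitRecOn with
  | zero => rw [cbd_zero]
  | add_one o ih =>
    rw [cbd_add_one]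
    exact (derivedSet_mono _ _ ih).trans ((isClosed_iff_derivedSet_subset _).1 hA)
  | limit o ho ih =>
    rw [cbd_limit A ho]
    exact (iInter_subset _ ⟨0, ho.bot_lt⟩).trans (ih 0 ho.bot_lt)

theorem subset_cbd_of_preperfect (hA : Preperfect A) (h : A ⊆ B) (o : Ordinal) :
    A ⊆ cbd B o := by
  induction o using Ordinal.limitRecOn with
  | zero => rwa [cbd_zero]
  | add_one o ih =>
    rw [cbd_add_one]
    exact (preperfect_iff_subset_derivedSet.1 hA).trans (derivedSet_mono _ _ ih)
  | limit o ho ih =>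
    rw [cbd_limit B ho]
    exact subset_iInter fun b => ih b.1 b.2

theorem countable_diff_cbd (hA : IsClosed A) (o : Ordinal) : (A \ cbd A o).Countable := by
  obtain ⟨V, D, hV, hD, rfl⟩ := exists_countable_union_perfect_of_isClosed hA
  have hD_cbd : D ⊆ cbd (V ∪ D) o := subset_cbd_of_preperfect hD.acc subset_union_right o
  exact hV.mono fun x hx => hx.1.resolve_right fun hxD => hx.2 (hD_cbd hxD)

theorem cbd_preimage_homeomorph (e : ℂ ≃ₜ ℂ) (A : Set ℂ) (o : Ordinal) :
    cbd (e ⁻¹' A) o = e ⁻¹' cbd A o := by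
  induction o using Ordinal.limitRecOn with
  | zero => simp only [cbd_zero]
  | add_one o ih =>
    ext x
    rw [cbd_add_one, cbd_add_one, ih, mem_preimage, mem_derivedSet, mem_derivedSet,
      ← comap_principal, e.isOpenEmbedding.accPt_comap_iff]
  | limit o ho ih =>
    rw [cbd_limit _ ho, cbd_limit A ho, preimage_iInter]
    exact iInter_congr fun b => ih b.1 b.2

theorem notMem_cbd_add_one_iff {x : ℂ} :
    x ∉ cbd A (o + 1) ↔ ∃ U ∈ 𝓝 x, U ∩ cbd A o ⊆ {x} := by
  simp only [cbd_add_one, mem_derivedSet, accPt_iff_frequently, not_frequently,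
    eventually_iff_exists_mem, not_and', ne_eq, not_not, subset_def, mem_inter_iff,
    mem_singleton_iff, and_imp]

end CantorBendixson

section Spheres

theorem exists_sphere_disjoint_of_countable {α : Type*} [PseudoMetricSpace α] {S : Set α}
    (hS : S.Countable) (c : α) {ε : ℝ} (hε : 0 < ε) :
    ∃ r ∈ Ioo 0 ε, Disjoint (sphere c r) S := by
  obtain ⟨r, hrS, hr⟩ := ((hS.image (dist · c)).dense_compl ℝ).exists_between hε
  exact ⟨r, hr, disjoint_left.2 fun z hz hzS => hrS ⟨z, hzS, hz⟩⟩

theorem exists_annulus_disjoint_of_isCompact {α : Type*} [PseudoMetricSpace α] {K : Set α}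
    (hK : IsCompact K) {c : α} {r : ℝ} (h : Disjoint (sphere c r) K) :
    ∃ s > r, Disjoint (closedBall c s \ ball c r) K := by
  have hclosed : IsClosed ((dist · c) '' (K \ ball c r)) :=
    ((hK.diff isOpen_ball).image (by fun_prop)).isClosed
  have hr : r ∉ (dist · c) '' (K \ ball c r) := by
    rintro ⟨z, ⟨hzK, -⟩, hzr⟩
    exact disjoint_left.1 h hzr hzK
  obtain ⟨s, hrs, hs⟩ := mem_nhdsGE_iff_exists_Icc_subset.1
    (mem_nhdsWithin_of_mem_nhds (hclosed.isOpen_compl.mem_nhds hr))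
  refine ⟨s, hrs, disjoint_left.2 fun z hz hzK => ?_⟩
  exact hs ⟨not_lt.1 hz.2, hz.1⟩ ⟨z, ⟨hzK, hz.2⟩, rfl⟩

theorem exists_isolating_circle {A : Set ℂ} (hA : IsClosed A) {o : Ordinal} {c : ℂ}
    (hc : c ∉ cbd A (o + 1)) :
    ∃ r > 0, Disjoint (sphere c r) A ∧ closedBall c r ∩ cbd A o ⊆ {c} := by
  obtain ⟨U, hU, hAU⟩ := notMem_cbd_add_one_iff.1 hc
  obtain ⟨ε, hε, hεU⟩ := Metric.mem_nhds_iff.1 hU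
  obtain ⟨r, ⟨hr, hrε⟩, hdisj⟩ :=
    exists_sphere_disjoint_of_countable (countable_diff_cbd hA o) c hε
  have hisol : closedBall c r ∩ cbd A o ⊆ {c} :=
    (inter_subset_inter_left _ ((closedBall_subset_ball hrε).trans hεU)).trans hAU
  refine ⟨r, hr, disjoint_left.2 fun z hz hzA => disjoint_left.1 hdisj hz ⟨hzA, fun hzo => ?_⟩,
    hisol⟩
  obtain rfl : z = c := hisol ⟨sphere_subset_closedBall hz, hzo⟩
  exact ne_of_mem_sphere hz hr.ne' rfl

end Spheres

section CircleIntegral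

variable {E F : Type*} [NormedAddCommGroup E] [NormedSpace ℂ E] {c : ℂ} {r s : ℝ}

theorem clm_circleIntegral_comm [NormedAddCommGroup F] [NormedSpace ℂ F] [CompleteSpace E]
    [CompleteSpace F] (L : E →L[ℂ] F) {f : ℂ → E} (hf : CircleIntegrable f c r) :
    L (∮ z in C(c, r), f z) = ∮ z in C(c, r), L (f z) := by
  simp only [circleIntegral, ← map_smul, L.intervalIntegral_comp_comm hf.out]

theorem circleIntegral_swap {f : ℂ → ℂ → E} {c' : ℂ} (hr : 0 ≤ r) (hs : 0 ≤ s)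
    (hf : ContinuousOn (fun p : ℂ × ℂ => f p.1 p.2) (sphere c r ×ˢ sphere c' s)) :
    (∮ w in C(c', s), ∮ z in C(c, r), f z w) = ∮ z in C(c, r), ∮ w in C(c', s), f z w := by
  have hcont : Continuous fun θ : ℝ × ℝ => f (circleMap c r θ.2) (circleMap c' s θ.1) :=
    hf.comp_continuous (f := fun θ : ℝ × ℝ => (circleMap c r θ.2, circleMap c' s θ.1))
      (by fun_prop) fun θ => ⟨circleMap_mem_sphere _ hr _, circleMap_mem_sphere _ hs _⟩
  simp only [circleIntegral, ← intervalIntegral.integral_smul, deriv_circleMap]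
  rw [MeasureTheory.intervalIntegral_intervalIntegral_swap]
  · simp only [smul_comm (circleMap 0 s _ * Complex.I)]
  · refine (Continuous.continuousOn ?_).integrableOn_compact (isCompact_uIcc.prod isCompact_uIcc)
      |>.mono_set (prod_mono uIoc_subset_uIcc uIoc_subset_uIcc)
    exact Continuous.smul (by fun_prop) (Continuous.smul (by fun_prop) hcont)

theorem circleIntegral_sub_inv_of_notMem_closedBall {w : ℂ} (hr : 0 ≤ r)
    (hw : w ∉ closedBall c r) : (∮ z in C(c, r), (z - w)⁻¹) = 0 := by
  have hne : ∀ z ∈ closedBall c r, z - w ≠ 0 := fun z hz =>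
    sub_ne_zero.2 (ne_of_mem_of_not_mem hz hw)
  refine Complex.circleIntegral_eq_zero_of_differentiable_on_off_countable hr countable_empty
    (by fun_prop (disch := assumption)) fun z hz => ?_
  have := hne z (ball_subset_closedBall hz.1)
  fun_prop (disch := assumption)

end CircleIntegral

section Resolvent

theorem commute_resolvent {R A : Type*} [CommSemiring R] [Ring A] [Algebra R A] {a b : A}
    (h : Commute b a) (z : R) : Commute b (resolvent a z) := by
  by_cases hz : z ∈ resolventSet R a
  · rw [spectrum.resolvent_eq hz]
    exact Commute.units_inv_right ((Algebra.commute_algebraMap_right z b).sub_right h)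
  · rw [spectrum.resolvent_zero_of_mem_spectrum hz]
    exact Commute.zero_right b

theorem continuousOn_resolvent {𝕜 A : Type*} [NontriviallyNormedField 𝕜] [NormedRing A]
    [NormedAlgebra 𝕜 A] [CompleteSpace A] (a : A) :
    ContinuousOn (resolvent a) (resolventSet 𝕜 a) := fun _ hz =>
  (spectrum.hasDerivAt_resolvent_const_left hz).continuousAt.continuousWithinAt

theorem isUnit_sub_smul_one_iff {R A : Type*} [CommRing R] [Ring A] [Algebra R A] {a : A} {μ : R} :
    IsUnit (a - μ • 1) ↔ μ ∉ spectrum R a := by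
  rw [spectrum.notMem_iff, Algebra.algebraMap_eq_smul_one, IsUnit.sub_iff]

theorem spectrum_sub_smul_one {R A : Type*} [CommRing R] [Ring A] [Algebra R A] (a : A) (μ : R) :
    spectrum R (a - μ • 1) = (· + μ) ⁻¹' spectrum R a := by
  ext w
  rw [mem_preimage, spectrum.add_mem_iff, Algebra.algebraMap_eq_smul_one, neg_add_eq_sub]

theorem cbd_spectrum_sub_smul_one_subset_iff {A : Type*} [Ring A] [Algebra ℂ A] {a : A} {μ : ℂ}
    {o : Ordinal} :
    cbd (spectrum ℂ (a - μ • 1)) o ⊆ {0} ↔ cbd (spectrum ℂ a) o ⊆ {μ} := by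
  have hμ : ({0} : Set ℂ) = Homeomorph.addRight μ ⁻¹' {μ} := by ext; simp
  rw [spectrum_sub_smul_one, ← Homeomorph.coe_addRight, cbd_preimage_homeomorph, hμ,
    (Homeomorph.addRight μ).surjective.preimage_subset_preimage_iff]

end Resolvent

section RieszProjection

variable {A : Type*} [NormedRing A] [NormedAlgebra ℂ A]

/-- The Riesz projection `(2πi)⁻¹ ∮ (z - a)⁻¹ dz` of `a` over the circle of centre `c` and
radius `r`; it splits off the part of the spectrum of `a` inside the circle. -/
noncomputable def rieszProjection (a : A) (c : ℂ) (r : ℝ) : A :=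
  (2 * π * I : ℂ)⁻¹ • ∮ z in C(c, r), resolvent a z

/-- The Cauchy transform `l ↦ (2πi)⁻¹ ∮ (l - z)⁻¹ (z - a)⁻¹ dz` of the resolvent of `a` over a
circle. Up to sign it inverts `l - a` on one of the two summands cut out by the Riesz projection:
on the kernel for `l` inside the circle, on the range for `l` outside. -/
noncomputable def resolventCauchyTransform (a : A) (c : ℂ) (r : ℝ) (l : ℂ) : A :=
  (2 * π * I : ℂ)⁻¹ • ∮ z in C(c, r), (l - z)⁻¹ • resolvent a z

variable [CompleteSpace A] {a b : A} {c l : ℂ} {r s : ℝ}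

theorem mul_circleIntegral (b : A) {f : ℂ → A} (hf : CircleIntegrable f c r) :
    b * ∮ z in C(c, r), f z = ∮ z in C(c, r), b * f z :=
  clm_circleIntegral_comm (ContinuousLinearMap.mul ℂ A b) hf

theorem circleIntegral_mul (b : A) {f : ℂ → A} (hf : CircleIntegrable f c r) :
    (∮ z in C(c, r), f z) * b = ∮ z in C(c, r), f z * b :=
  clm_circleIntegral_comm ((ContinuousLinearMap.mul ℂ A).flip b) hf

theorem commute_circleIntegral {f : ℂ → A} (hf : CircleIntegrable f c r)
    (h : ∀ z, Commute b (f z)) : Commute b (∮ z in C(c, r), f z) := by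
  rw [Commute, SemiconjBy, mul_circleIntegral b hf, circleIntegral_mul b hf]
  simp only [(h _).eq]

theorem circleIntegrable_resolvent (hr : 0 ≤ r) (h : sphere c r ⊆ resolventSet ℂ a) :
    CircleIntegrable (resolvent a) c r :=
  ((continuousOn_resolvent a).mono h).circleIntegrable hr

theorem circleIntegrable_inv_sub_smul_resolvent (hr : 0 ≤ r) (h : sphere c r ⊆ resolventSet ℂ a)
    (hl : l ∉ sphere c r) : CircleIntegrable (fun z => (l - z)⁻¹ • resolvent a z) c r := by
  have hne : ∀ z ∈ sphere c r, l - z ≠ 0 := fun z hz =>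
    sub_ne_zero.2 (ne_of_mem_of_not_mem hz hl).symm
  exact (((continuousOn_const.sub continuousOn_id).inv₀ hne).smul
    ((continuousOn_resolvent a).mono h)).circleIntegrable hr

theorem commute_rieszProjection (hr : 0 ≤ r) (h : sphere c r ⊆ resolventSet ℂ a)
    (hb : Commute b a) : Commute b (rieszProjection a c r) :=
  (commute_circleIntegral (circleIntegrable_resolvent hr h)
    fun z => commute_resolvent hb z).smul_right _

theorem commute_resolventCauchyTransform (hr : 0 ≤ r) (h : sphere c r ⊆ resolventSet ℂ a)
    (hl : l ∉ sphere c r) (hb : Commute b a) : Commute b (resolventCauchyTransform a c r l) :=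
  (commute_circleIntegral (circleIntegrable_inv_sub_smul_resolvent hr h hl)
    fun z => (commute_resolvent hb z).smul_right _).smul_right _

theorem sub_mul_resolventCauchyTransform (hr : 0 ≤ r) (h : sphere c r ⊆ resolventSet ℂ a)
    (hl : l ∉ sphere c r) :
    (algebraMap ℂ A l - a) * resolventCauchyTransform a c r l =
      rieszProjection a c r - ((2 * π * I : ℂ)⁻¹ * ∮ z in C(c, r), (z - l)⁻¹) • 1 := by
  have hne : ∀ z ∈ sphere c r, z - l ≠ 0 := fun z hz =>
    sub_ne_zero.2 (ne_of_mem_of_not_mem hz hl)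
  have hpointwise : ∀ z ∈ sphere c r,
      (algebraMap ℂ A l - a) * ((l - z)⁻¹ • resolvent a z) = resolvent a z - (z - l)⁻¹ • 1 := by
    intro z hz
    have hsplit : algebraMap ℂ A l - a = (algebraMap ℂ A z - a) - algebraMap ℂ A (z - l) := by
      rw [map_sub]; abel
    rw [mul_smul_comm, hsplit, sub_mul, resolvent, Ring.mul_inverse_cancel _ (h hz),
      ← Algebra.smul_def, ← neg_sub z l, inv_neg, neg_smul, smul_sub,
      inv_smul_smul₀ (hne z hz), neg_sub]
  have hintegrable : CircleIntegrable (fun z => (z - l)⁻¹ • (1 : A)) c r :=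
    (((continuousOn_id.sub continuousOn_const).inv₀ hne).smul
      continuousOn_const).circleIntegrable hr
  rw [resolventCauchyTransform, rieszProjection, mul_smul_comm,
    mul_circleIntegral _ (circleIntegrable_inv_sub_smul_resolvent hr h hl),
    circleIntegral.integral_congr hr hpointwise,
    circleIntegral.integral_sub (circleIntegrable_resolvent hr h) hintegrable,
    circleIntegral.integral_smul_const, smul_sub, smul_smul]

theorem sub_mul_resolventCauchyTransform_of_mem_ball (h : sphere c r ⊆ resolventSet ℂ a)
    (hl : l ∈ ball c r) :
    (algebraMap ℂ A l - a) * resolventCauchyTransform a c r l = rieszProjection a c r - 1 := by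
  rw [sub_mul_resolventCauchyTransform (pos_of_mem_ball hl).le h (ne_of_lt hl),
    circleIntegral.integral_sub_inv_of_mem_ball hl, inv_mul_cancel₀ two_pi_I_ne_zero, one_smul]

theorem sub_mul_resolventCauchyTransform_of_notMem_closedBall (hr : 0 ≤ r)
    (h : sphere c r ⊆ resolventSet ℂ a) (hl : l ∉ closedBall c r) :
    (algebraMap ℂ A l - a) * resolventCauchyTransform a c r l = rieszProjection a c r := by
  rw [sub_mul_resolventCauchyTransform hr h (notMem_subset sphere_subset_closedBall hl),
    circleIntegral_sub_inv_of_notMem_closedBall hr hl, mul_zero, zero_smul, _root_.sub_zero]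

theorem resolvent_mul_rieszProjection (hr : 0 ≤ r) (h : sphere c r ⊆ resolventSet ℂ a)
    (hl : l ∈ resolventSet ℂ a \ closedBall c r) :
    resolvent a l * rieszProjection a c r = resolventCauchyTransform a c r l := by
  rw [← sub_mul_resolventCauchyTransform_of_notMem_closedBall hr h hl.2, resolvent,
    Ring.inverse_mul_cancel_left _ _ hl.1]

theorem rieszProjection_eq_of_annulus (hr : 0 < r) (hrs : r ≤ s)
    (h : closedBall c s \ ball c r ⊆ resolventSet ℂ a) :
    rieszProjection a c s = rieszProjection a c r := by
  rw [rieszProjection, rieszProjection,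
    circleIntegral_eq_of_differentiable_on_annulus_off_countable hr hrs countable_empty
      ((continuousOn_resolvent a).mono h)]
  intro z hz
  exact (spectrum.hasDerivAt_resolvent_const_left
    (h (sdiff_subset_sdiff ball_subset_closedBall ball_subset_closedBall hz.1))).differentiableAt

theorem circleIntegral_resolventCauchyTransform (hr : 0 ≤ r) (hrs : r < s)
    (h : sphere c r ⊆ resolventSet ℂ a) :
    ∮ w in C(c, s), resolventCauchyTransform a c r w = ∮ z in C(c, r), resolvent a z := by
  have hmem : ∀ z ∈ sphere c r, z ∈ ball c s := fun z hz => hz.trans_lt hrs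
  have hne : ∀ z ∈ sphere c r, ∀ w ∈ sphere c s, w - z ≠ 0 := fun z hz w hw =>
    sub_ne_zero.2 (ne_of_mem_of_not_mem (hmem z hz) hw.not_lt).symm
  have hcont : ContinuousOn (fun p : ℂ × ℂ => (p.2 - p.1)⁻¹ • resolvent a p.1)
      (sphere c r ×ˢ sphere c s) :=
    ((continuousOn_snd.sub continuousOn_fst).inv₀ fun p hp => hne p.1 hp.1 p.2 hp.2).smul
      (((continuousOn_resolvent a).mono h).comp continuousOn_fst fun p hp => hp.1)
  have hinner : ∀ z ∈ sphere c r,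
      ∮ w in C(c, s), (w - z)⁻¹ • resolvent a z = (2 * π * I : ℂ) • resolvent a z := by
    intro z hz
    rw [circleIntegral.integral_smul_const,
      circleIntegral.integral_sub_inv_of_mem_ball (hmem z hz)]
  simp only [resolventCauchyTransform]
  rw [circleIntegral.integral_smul, circleIntegral_swap hr (hr.trans hrs.le) hcont,
    circleIntegral.integral_congr hr hinner, circleIntegral.integral_smul,
    inv_smul_smul₀ two_pi_I_ne_zero]

theorem isIdempotentElem_rieszProjection (hr : 0 < r) (h : sphere c r ⊆ resolventSet ℂ a) :
    IsIdempotentElem (rieszProjection a c r) := by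
  obtain ⟨s, hrs, hs⟩ := exists_annulus_disjoint_of_isCompact (spectrum.isCompact a)
    (disjoint_compl_right_iff_subset.2 h)
  replace hs : closedBall c s \ ball c r ⊆ resolventSet ℂ a := disjoint_compl_right_iff_subset.1 hs
  have hs₀ : 0 ≤ s := hr.le.trans hrs.le
  have hsphere : sphere c s ⊆ resolventSet ℂ a \ closedBall c r := fun w hw =>
    ⟨hs ⟨sphere_subset_closedBall hw, fun hwr => (hrs.trans (hw.symm.trans_lt hwr)).false⟩,
      fun hwr => (hrs.trans_le (hw.symm.trans_le hwr)).false⟩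
  calc rieszProjection a c r * rieszProjection a c r
      = rieszProjection a c s * rieszProjection a c r := by
        rw [rieszProjection_eq_of_annulus hr hrs.le hs]
    _ = (2 * π * I : ℂ)⁻¹ • ∮ w in C(c, s), resolvent a w * rieszProjection a c r := by
        nth_rw 1 [rieszProjection]
        rw [smul_mul_assoc, circleIntegral_mul _
          (circleIntegrable_resolvent hs₀ (hsphere.trans sdiff_subset))]
    _ = (2 * π * I : ℂ)⁻¹ • ∮ w in C(c, s), resolventCauchyTransform a c r w := by
        rw [circleIntegral.integral_congr hs₀ fun w hw =>
          resolvent_mul_rieszProjection hr.le h (hsphere hw)]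
    _ = rieszProjection a c r := by
        rw [circleIntegral_resolventCauchyTransform hr.le hrs h, rieszProjection]

end RieszProjection

section Restriction

variable {E : Type*} [NormedAddCommGroup E] [NormedSpace ℂ E] {M N : Submodule ℂ E}

theorem isUnit_restr {T S : E →L[ℂ] E} (hT : ∀ x ∈ M, T x ∈ M) (hTS : Commute T S)
    (hS : ∀ x ∈ M, S x ∈ M) (hinv : ∀ x ∈ M, T (S x) = x) : IsUnit (restr T M hT) := by
  refine ⟨⟨restr T M hT, restr S M hS, ?_, ?_⟩, rfl⟩ <;> ext x
  · exact hinv x x.2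
  · exact (congr($(hTS.eq.symm) x)).trans (hinv x x.2)

theorem mapsTo_algebraMap_sub {T : E →L[ℂ] E} (hT : ∀ x ∈ M, T x ∈ M) (l : ℂ) :
    ∀ x ∈ M, (algebraMap ℂ (E →L[ℂ] E) l - T) x ∈ M := fun x hx =>
  M.sub_mem (M.smul_mem l hx) (hT x hx)

theorem isUnit_iff_isUnit_restr [CompleteSpace E] {T : E →L[ℂ] E} (hT : ∀ x ∈ M, T x ∈ M)
    (hT' : ∀ x ∈ N, T x ∈ N) (hM : IsClosed (M : Set E)) (hN : IsClosed (N : Set E))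
    (hMN : IsCompl M N) : IsUnit T ↔ IsUnit (restr T M hT) ∧ IsUnit (restr T N hT') := by
  have := hM.completeSpace_coe
  have := hN.completeSpace_coe
  have hconj : T ∘ M.prodEquivOfIsCompl N hMN =
      M.prodEquivOfIsCompl N hMN ∘ Prod.map (restr T M hT) (restr T N hT') := by
    ext x
    exact map_add T (x.1 : E) x.2
  rw [ContinuousLinearMap.isUnit_iff_bijective, ContinuousLinearMap.isUnit_iff_bijective,
    ContinuousLinearMap.isUnit_iff_bijective, ← Prod.map_bijective,
    ← Function.Bijective.of_comp_iff T (M.prodEquivOfIsCompl N hMN).bijective, hconj,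
    Function.Bijective.of_comp_iff' (M.prodEquivOfIsCompl N hMN).bijective]

theorem spectrum_eq_union_spectrum_restr [CompleteSpace E] {T : E →L[ℂ] E}
    (hT : ∀ x ∈ M, T x ∈ M) (hT' : ∀ x ∈ N, T x ∈ N) (hM : IsClosed (M : Set E))
    (hN : IsClosed (N : Set E)) (hMN : IsCompl M N) :
    spectrum ℂ T = spectrum ℂ (restr T M hT) ∪ spectrum ℂ (restr T N hT') := by
  rw [spectrum, spectrum, spectrum, ← compl_inter, compl_inj_iff]
  ext l
  exact isUnit_iff_isUnit_restr (mapsTo_algebraMap_sub hT l) (mapsTo_algebraMap_sub hT' l)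
    hM hN hMN

theorem ker_invariant_of_commute {P S : E →L[ℂ] E} (h : Commute P S) : ∀ x ∈ P.ker, S x ∈ P.ker :=
  fun x (hx : P x = 0) => (congr($h.eq x)).trans (by simp [hx])

theorem range_invariant_of_commute {P S : E →L[ℂ] E} (h : Commute P S) :
    ∀ x ∈ P.range, S x ∈ P.range := by
  rintro _ ⟨x, rfl⟩
  exact ⟨S x, congr($h.eq x)⟩

section RieszDecomposition

variable [CompleteSpace E] {T : E →L[ℂ] E} {c : ℂ} {r : ℝ}

theorem ball_subset_resolventSet_restr_ker (h : sphere c r ⊆ resolventSet ℂ T)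
    (hT : ∀ x ∈ (rieszProjection T c r).ker, T x ∈ (rieszProjection T c r).ker) :
    ball c r ⊆ resolventSet ℂ (restr T _ hT) := by
  intro l hl
  have hr : 0 ≤ r := (pos_of_mem_ball hl).le
  have hK : Commute T (resolventCauchyTransform T c r l) :=
    commute_resolventCauchyTransform hr h (ne_of_lt hl) (Commute.refl T)
  refine isUnit_restr (S := -resolventCauchyTransform T c r l) (mapsTo_algebraMap_sub hT l)
    ((Algebra.commute_algebraMap_left l _).sub_left hK).neg_right
    (ker_invariant_of_commute (commute_rieszProjection hr h hK.neg_right.symm).symm) ?_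
  intro x (hx : rieszProjection T c r x = 0)
  rw [← mul_apply_eq_comp, mul_neg, sub_mul_resolventCauchyTransform_of_mem_ball h hl]
  simp [hx]

theorem spectrum_restr_range_subset_closedBall (hr : 0 < r) (h : sphere c r ⊆ resolventSet ℂ T)
    (hT : ∀ x ∈ (rieszProjection T c r).range, T x ∈ (rieszProjection T c r).range) :
    spectrum ℂ (restr T _ hT) ⊆ closedBall c r := by
  rw [spectrum, compl_subset_comm]
  intro l hl
  have hK : Commute T (resolventCauchyTransform T c r l) :=
    commute_resolventCauchyTransform hr.le h (notMem_subset sphere_subset_closedBall hl)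
      (Commute.refl T)
  refine isUnit_restr (S := resolventCauchyTransform T c r l) (mapsTo_algebraMap_sub hT l)
    ((Algebra.commute_algebraMap_left l _).sub_left hK)
    (range_invariant_of_commute (commute_rieszProjection hr.le h hK.symm).symm) ?_
  rintro _ ⟨x, rfl⟩
  rw [← mul_apply_eq_comp,
    sub_mul_resolventCauchyTransform_of_notMem_closedBall hr.le h hl]
  exact congr($(isIdempotentElem_rieszProjection hr h) x)

theorem exists_riesz_decomposition (hr : 0 < r) (h : sphere c r ⊆ resolventSet ℂ T) :
    ∃ (M N : Submodule ℂ E) (hM : ∀ x ∈ M, T x ∈ M) (hN : ∀ x ∈ N, T x ∈ N),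
      IsClosed (M : Set E) ∧ IsClosed (N : Set E) ∧ IsCompl M N ∧
      ball c r ⊆ resolventSet ℂ (restr T M hM) ∧
      spectrum ℂ (restr T N hN) ⊆ closedBall c r := by
  have hP : IsIdempotentElem (rieszProjection T c r) := isIdempotentElem_rieszProjection hr h
  have hcomm : Commute (rieszProjection T c r) T :=
    (commute_rieszProjection hr.le h (Commute.refl T)).symm
  exact ⟨(rieszProjection T c r).ker, (rieszProjection T c r).range,
    ker_invariant_of_commute hcomm, range_invariant_of_commute hcomm,
    (rieszProjection T c r).isClosed_ker, ContinuousLinearMap.IsIdempotentElem.isClosed_range hP,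
    (LinearMap.IsIdempotentElem.isCompl
      (ContinuousLinearMap.IsIdempotentElem.toLinearMap hP)).symm,
    ball_subset_resolventSet_restr_ker h _, spectrum_restr_range_subset_closedBall hr h _⟩

end RieszDecomposition

end Restriction

/-- `μ ∉ acc^{β+1} σ(T)` iff there is `(M, N) ∈ Red T` such that `(T - μI)_M` is
invertible and `acc^β σ((T - μI)_N) ⊆ {0}`. -/
theorem gInv_iff_not_mem_cbd_succ (T : X →L[ℂ] X) (β : Ordinal) (μ : ℂ) :
    μ ∉ cbd (spectrum ℂ T) (β + 1) ↔
      ∃ (M N : Submodule ℂ X) (hM : ∀ x ∈ M, T x ∈ M) (hN : ∀ x ∈ N, T x ∈ N),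
        IsClosed (M : Set X) ∧ IsClosed (N : Set X) ∧ IsCompl M N ∧
        IsUnit (restr T M hM - μ • (1 : M →L[ℂ] M)) ∧
        cbd (spectrum ℂ (restr T N hN - μ • (1 : N →L[ℂ] N))) β ⊆ {0} := by
  simp only [isUnit_sub_smul_one_iff, cbd_spectrum_sub_smul_one_subset_iff]
  constructor
  · intro hμ
    obtain ⟨r, hr, hdisj, hisol⟩ := exists_isolating_circle (spectrum.isClosed T) hμ
    obtain ⟨M, N, hM, hN, hMc, hNc, hMN, hball, hclosedBall⟩ :=
      exists_riesz_decomposition hr (disjoint_compl_right_iff_subset.1 hdisj)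
    have hNT : spectrum ℂ (restr T N hN) ⊆ spectrum ℂ T :=
      subset_union_right.trans (spectrum_eq_union_spectrum_restr hM hN hMc hNc hMN).superset
    refine ⟨M, N, hM, hN, hMc, hNc, hMN, not_not.2 (hball (mem_ball_self hr)), ?_⟩
    calc cbd (spectrum ℂ (restr T N hN)) β
        ⊆ cbd (closedBall μ r) β ∩ cbd (spectrum ℂ T) β :=
          subset_inter (cbd_mono hclosedBall β) (cbd_mono hNT β)
      _ ⊆ closedBall μ r ∩ cbd (spectrum ℂ T) β :=
          inter_subset_inter_left _ (cbd_subset isClosed_closedBall β)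
      _ ⊆ {μ} := hisol
  · rintro ⟨M, N, hM, hN, hMc, hNc, hMN, hμM, hμN⟩
    have := hMc.completeSpace_coe
    have hopen := spectrum.isOpen_resolventSet (𝕜 := ℂ) (restr T M hM)
    have hlocal : spectrum ℂ T ∩ resolventSet ℂ (restr T M hM) ⊆ spectrum ℂ (restr T N hN) := by
      rw [spectrum_eq_union_spectrum_restr hM hN hMc hNc hMN]
      exact fun l hl => hl.1.resolve_left (not_not.2 hl.2)
    refine notMem_cbd_add_one_iff.2 ⟨_, hopen.mem_nhds (not_not.1 hμM), ?_⟩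
    rw [inter_comm]
    exact (cbd_inter_subset_of_isOpen hopen hlocal β).trans hμN
end
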